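/- Let f : ℝⁿ → ℝⁿ be C³ and H : ℝⁿ → ℝ be C⁴. Let φ : ℝ × ℝⁿ → ℝⁿ be a global flow of f, i.e. φ(0,x) = x and ∂_t φ(t,x) = f(φ(t,x)) for all t, x. Let x₀ satisfy H(x₀) = 0, 𝓛_f H(x₀) = 0 and 𝓛²_f H(x₀) < 0. Then there exist δ > 0 and K > 0 such that for every x with H(x) = 0, ‖x − x₀‖ < δ and ν := 𝓛_f H(x) > 0, there exists τ > 0 with: H(φ(τ,x)) = 0; H(φ(t,x)) > 0 for all t ∈ (0, τ); and the estimates |τ + 2ν/𝓛²_f H(x)| ≤ K ν², ‖φ(τ,x) − x + (2ν/𝓛²_f H(x))·f(x)‖ ≤ K ν², and |𝓛_f H(φ(τ,x)) + ν − (2𝓛³_f H(x)/(3(𝓛²_f H(x))²))·ν²| ≤ K ν³. -/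

import Mathlib

/-- Iterated Lie derivatives: `lieIter f h m = 𝓛_f^m h`, defined recursively by
`𝓛_f^0 h = h` and `𝓛_f^{m+1} h (x) = D(𝓛_f^m h)(x)[f(x)]`. -/
noncomputable def lieIter {n : ℕ} (f : EuclideanSpace ℝ (Fin n) → EuclideanSpace ℝ (Fin n))
    (h : EuclideanSpace ℝ (Fin n) → ℝ) : ℕ → EuclideanSpace ℝ (Fin n) → ℝ
  | 0 => h
  | m + 1 => fun x => fderiv ℝ (lieIter f h m) x (f x)

/-!
Along an orbit `γ`, the derivatives of `h ∘ γ` are the iterated Lie derivatives `𝓛_f^k h ∘ γ`, so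
everything reduces to Taylor expansions in time with remainders uniform near `x₀`. Put
`ν = 𝓛_f H(x)`, `b = 𝓛²_f H(x)`, `d = 𝓛³_f H(x)`. As `𝓛²_f H ≤ -c < 0` near `x₀`, the function
`H ∘ γ` is strongly concave and lies below `ν t - c t² / 2`; it therefore has a zero
`τ ∈ (0, 2ν/c]` and is positive before it. Dividing the expansion of `H(γ(τ)) = 0` by `τ` gives
`ν + b τ / 2 + d τ² / 6 = O(ν³)`, whence `τ = -2ν/b + O(ν²)`. Eliminating `b τ` between this
expansion and `𝓛_f H(γ(τ)) = ν + b τ + d τ² / 2 + O(ν³)` leaves `-ν + d τ² / 6 + O(ν³)`, whose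
quadratic term is `2 d / (3 b²) ν²`.
-/

section FoldReturn

open Set Filter Topology
open scoped Nat

variable {E F : Type*} [NormedAddCommGroup E] [NormedSpace ℝ E]
  [NormedAddCommGroup F] [NormedSpace ℝ F]

theorem norm_sub_taylor_le {g : ℕ → ℝ → F} {T M : ℝ} {n : ℕ}
    (hg : ∀ k < n, ∀ t ∈ Icc 0 T, HasDerivWithinAt (g k) (g (k + 1) t) (Icc 0 T) t)
    (hM : ∀ t ∈ Icc 0 T, ‖g n t‖ ≤ M) :
    ∀ t ∈ Icc 0 T, ‖g 0 t - ∑ k ∈ Finset.range n, (t ^ k / k !) • g k 0‖ ≤ M * (t ^ n / n !) := by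
  induction n generalizing g with
  | zero => simpa using hM
  | succ n ih =>
    have hmonomial (k : ℕ) (t : ℝ) :
        HasDerivAt (fun s : ℝ ↦ s ^ (k + 1) / (k + 1)!) (t ^ k / k !) t := by
      refine ((hasDerivAt_pow (k + 1) t).div_const _).congr_deriv ?_
      rw [Nat.factorial_succ]
      push_cast
      field_simp
    have hderiv : ∀ t ∈ Icc 0 T, HasDerivWithinAt
        (fun s ↦ g 0 s - ∑ k ∈ Finset.range (n + 1), (s ^ k / k !) • g k 0)
        (g 1 t - ∑ k ∈ Finset.range n, (t ^ k / k !) • g (k + 1) 0) (Icc 0 T) t := by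
      intro t ht
      simp only [Finset.sum_range_succ' _ n, pow_zero, Nat.factorial_zero, Nat.cast_one, div_one,
        one_smul]
      exact (hg 0 n.succ_pos t ht).fun_sub <| (HasDerivWithinAt.fun_sum fun k _ ↦
        (hmonomial k t).hasDerivWithinAt.smul_const (g (k + 1) 0)).add_const (g 0 0)
    refine image_norm_le_of_norm_deriv_right_le_deriv_boundary
      (fun t ht ↦ (hderiv t ht).continuousWithinAt)
      (fun t ht ↦ (hderiv t (Ico_subset_Icc_self ht)).mono_of_mem_nhdsWithin
        (Icc_mem_nhdsGE_of_mem ht))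
      ?_ (fun t ↦ (hmonomial n t).const_mul M)
      fun t ht ↦ ih (g := fun k ↦ g (k + 1)) (fun k hk ↦ hg (k + 1) (by lia)) hM t
        (Ico_subset_Icc_self ht)
    simp [Finset.sum_range_succ' _ n]

theorem strongConcaveOn_of_hasDerivWithinAt2_le {u u' u'' : ℝ → ℝ} {D : Set ℝ} {c : ℝ}
    (hD : Convex ℝ D) (hu : ∀ t ∈ D, HasDerivWithinAt u (u' t) D t)
    (hu' : ∀ t ∈ D, HasDerivWithinAt u' (u'' t) D t) (hu'' : ∀ t ∈ D, u'' t ≤ -c) :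
    StrongConcaveOn D c u := by
  simp only [strongConcaveOn_iff_convex, Real.norm_eq_abs, sq_abs]
  have hsub : interior D ⊆ D := interior_subset
  have hg (t : ℝ) (ht : t ∈ D) :
      HasDerivWithinAt (fun s ↦ u s + c / 2 * s ^ 2) (u' t + c * t) D t := by
    refine (hu t ht).fun_add
      (((hasDerivAt_pow 2 t).const_mul (c / 2)).hasDerivWithinAt.congr_deriv ?_)
    simp only [Nat.cast_ofNat, Nat.add_one_sub_one, pow_one]
    ring
  refine concaveOn_of_hasDerivWithinAt2_nonpos hD (fun t ht ↦ (hg t ht).continuousWithinAt)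
    (fun t ht ↦ (hg t (hsub ht)).mono hsub)
    (fun t ht ↦ ((hu' t (hsub ht)).fun_add ((hasDerivAt_id' t).const_mul c).hasDerivWithinAt).mono
      hsub)
    fun t ht ↦ ?_
  linarith [hu'' t (hsub ht)]

theorem le_quadratic_of_strongConcaveOn {u : ℝ → ℝ} {s : Set ℝ} {c v x y : ℝ}
    (hu : StrongConcaveOn s c u) (hx : x ∈ s) (hy : y ∈ s) (hxy : x < y)
    (hv : HasDerivWithinAt u v s x) :
    u y ≤ u x + v * (y - x) - c / 2 * (y - x) ^ 2 := by
  have hg : HasDerivWithinAt (fun t ↦ u t + c / 2 * ‖t‖ ^ 2) (v + c * x) s x := by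
    simp only [Real.norm_eq_abs, sq_abs]
    exact hv.fun_add ((hasDerivAt_pow 2 x).const_mul (c / 2)).hasDerivWithinAt
      |>.congr_deriv (by simp; ring)
  have hslope := (strongConcaveOn_iff_convex.1 hu).slope_le_of_hasDerivWithinAt hx hy hxy hg
  simp only [slope_def_field, Real.norm_eq_abs, sq_abs, div_le_iff₀ (sub_pos.2 hxy)] at hslope
  linear_combination hslope

theorem exists_first_zero_of_strictConcaveOn {u : ℝ → ℝ} {v a b : ℝ} (hab : a < b)
    (hu : StrictConcaveOn ℝ (Icc a b) u) (hcont : ContinuousOn u (Icc a b)) (ha : u a = 0)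
    (hb : u b ≤ 0) (hderiv : HasDerivWithinAt u v (Icc a b) a) (hv : 0 < v) :
    ∃ τ ∈ Ioc a b, u τ = 0 ∧ ∀ t ∈ Ioo a τ, 0 < u t := by
  obtain ⟨s, hus, hs⟩ : ∃ s, 0 < u s ∧ s ∈ Ioc a b := by
    have hslope : ∀ᶠ t in 𝓝[>] a, 0 < slope u a t := by
      have h := hasDerivWithinAt_iff_tendsto_slope.1 hderiv
      rw [Icc_sdiff_left, nhdsWithin_Ioc_eq_nhdsGT hab] at h
      exact h.eventually_const_lt hv
    obtain ⟨s, hs, hsab⟩ := (hslope.and (Ioc_mem_nhdsGT hab)).exists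
    rw [slope_def_field, ha, sub_zero, div_pos_iff_of_pos_right (sub_pos.2 hsab.1)] at hs
    exact ⟨s, hs, hsab⟩
  obtain ⟨τ, hτ, huτ⟩ := intermediate_value_Icc' hs.2
    (hcont.mono (Icc_subset_Icc_left hs.1.le)) ⟨hb, hus.le⟩
  have haτ : a < τ := hs.1.trans_le hτ.1
  refine ⟨τ, ⟨haτ, hτ.2⟩, huτ, fun t ht ↦ ?_⟩
  have h := hu.lt_on_openSegment (left_mem_Icc.2 hab.le) ⟨haτ.le, hτ.2⟩ haτ.ne
    (by rwa [openSegment_eq_Ioo haτ])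
  rwa [ha, huτ, min_self] at h

theorem exists_first_zero_of_deriv2_le {u u' u'' : ℝ → ℝ} {c T : ℝ} (hc : 0 < c)
    (hu : ∀ t ∈ Icc 0 T, HasDerivWithinAt u (u' t) (Icc 0 T) t)
    (hu' : ∀ t ∈ Icc 0 T, HasDerivWithinAt u' (u'' t) (Icc 0 T) t)
    (hu'' : ∀ t ∈ Icc 0 T, u'' t ≤ -c) (h0 : u 0 = 0) (hv : 0 < u' 0) (hT : 2 * u' 0 / c ≤ T) :
    ∃ τ ∈ Ioc 0 (2 * u' 0 / c), u τ = 0 ∧ ∀ t ∈ Ioo 0 τ, 0 < u t := by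
  have hpos : 0 < 2 * u' 0 / c := by positivity
  have hT0 : (0 : ℝ) ∈ Icc 0 T := ⟨le_rfl, hpos.le.trans hT⟩
  have hsub : Icc 0 (2 * u' 0 / c) ⊆ Icc 0 T := Icc_subset_Icc_right hT
  have hstrong := strongConcaveOn_of_hasDerivWithinAt2_le (convex_Icc 0 T) hu hu' hu''
  have hend : u (2 * u' 0 / c) ≤ 0 := by
    refine (le_quadratic_of_strongConcaveOn hstrong hT0 ⟨hpos.le, hT⟩ hpos (hu 0 hT0)).trans_eq ?_
    rw [h0]
    field_simp
    ring
  exact exists_first_zero_of_strictConcaveOn hpos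
    ((hstrong.strictConcaveOn hc).subset hsub (convex_Icc _ _))
    (fun t ht ↦ ((hu t (hsub ht)).mono hsub).continuousWithinAt) h0 hend ((hu 0 hT0).mono hsub) hv

theorem abs_return_time_add_le_of_taylor {ν b c M τ : ℝ} (hc : 0 < c) (hb : b ≤ -c) (hτ : 0 < τ)
    (hτν : τ ≤ 2 * ν / c) (hM : 0 ≤ M)
    (hzero : |ν * τ + b * τ ^ 2 / 2| ≤ M * τ ^ 3 / 6) :
    |τ + 2 * ν / b| ≤ 4 * M / (3 * c ^ 3) * ν ^ 2 := by
  have hb0 : b < 0 := by linarith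
  have hfactor : ν * τ + b * τ ^ 2 / 2 = b * (τ + 2 * ν / b) * (τ / 2) := by
    field_simp [hb0.ne]
    ring
  have hmul : c * |τ + 2 * ν / b| ≤ M * τ ^ 2 / 3 := by
    rw [hfactor, abs_mul, abs_mul, abs_of_pos (half_pos hτ), abs_of_neg hb0] at hzero
    have hcb : c * |τ + 2 * ν / b| ≤ -b * |τ + 2 * ν / b| := by gcongr; linarith
    refine hcb.trans (le_of_mul_le_mul_right ?_ (half_pos hτ))
    linear_combination hzero
  calc |τ + 2 * ν / b| ≤ M * τ ^ 2 / 3 / c := by rwa [le_div_iff₀' hc]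
    _ ≤ M * (2 * ν / c) ^ 2 / 3 / c := by gcongr
    _ = 4 * M / (3 * c ^ 3) * ν ^ 2 := by field_simp; ring

theorem abs_return_velocity_add_sub_le_of_taylor {ν b c d M τ w : ℝ} (hc : 0 < c)
    (hb : b ≤ -c) (hd : |d| ≤ M) (hτ : 0 < τ) (hτν : τ ≤ 2 * ν / c)
    (hzero : |ν * τ + b * τ ^ 2 / 2 + d * τ ^ 3 / 6| ≤ M * τ ^ 4 / 24)
    (hw : |w - (ν + b * τ + d * τ ^ 2 / 2)| ≤ M * τ ^ 3 / 6)
    (htime : |τ + 2 * ν / b| ≤ 4 * M / (3 * c ^ 3) * ν ^ 2) :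
    |w + ν - 2 * d / (3 * b ^ 2) * ν ^ 2| ≤ (2 * M / c ^ 3 + M ^ 2 / c ^ 4) * ν ^ 3 := by
  have hM : 0 ≤ M := (abs_nonneg d).trans hd
  have hb0 : b < 0 := by linarith
  have hν : 0 < ν := by
    have := hτ.trans_le hτν
    rw [lt_div_iff₀ hc] at this
    linarith
  set ρ := ν + b * τ / 2 + d * τ ^ 2 / 6 with hρ
  set σ := w - (ν + b * τ + d * τ ^ 2 / 2) with hσ
  have hρ_le : |ρ| ≤ M * τ ^ 3 / 24 := by
    have hfactor : ν * τ + b * τ ^ 2 / 2 + d * τ ^ 3 / 6 = ρ * τ := by rw [hρ]; ring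
    rw [hfactor, abs_mul, abs_of_pos hτ] at hzero
    refine le_of_mul_le_mul_right ?_ hτ
    linear_combination hzero
  have hsub_le : |τ - 2 * ν / b| ≤ 4 * ν / c := by
    have hquot : |2 * ν / b| ≤ 2 * ν / c := by
      rw [abs_div, abs_of_pos (by positivity : 0 < 2 * ν), abs_of_neg hb0]
      gcongr
      linarith
    calc |τ - 2 * ν / b| ≤ |τ| + |2 * ν / b| := abs_sub _ _
      _ ≤ 2 * ν / c + 2 * ν / c := by rw [abs_of_pos hτ]; gcongr
      _ = 4 * ν / c := by ring
  have hsplit : w + ν - 2 * d / (3 * b ^ 2) * ν ^ 2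
      = σ + 2 * ρ + d / 6 * (τ + 2 * ν / b) * (τ - 2 * ν / b) := by
    rw [hσ, hρ]
    field_simp
    ring
  calc |w + ν - 2 * d / (3 * b ^ 2) * ν ^ 2|
      ≤ |σ| + 2 * |ρ| + |d| / 6 * |τ + 2 * ν / b| * |τ - 2 * ν / b| := by
        rw [hsplit]
        refine (abs_add_three _ _ _).trans_eq ?_
        simp only [abs_mul, abs_div, Nat.abs_ofNat]
    _ ≤ M * τ ^ 3 / 6 + 2 * (M * τ ^ 3 / 24)
          + M / 6 * (4 * M / (3 * c ^ 3) * ν ^ 2) * (4 * ν / c) := by gcongr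
    _ = M * τ ^ 3 / 4 + 8 / 9 * (M ^ 2 / c ^ 4 * ν ^ 3) := by field_simp; ring
    _ ≤ M * (2 * ν / c) ^ 3 / 4 + 1 * (M ^ 2 / c ^ 4 * ν ^ 3) := by gcongr; norm_num
    _ = (2 * M / c ^ 3 + M ^ 2 / c ^ 4) * ν ^ 3 := by field_simp; ring

/-- The Lie derivative `𝓛_f h` of a vector-valued function `h` along the vector field `f`;
iterated Lie derivatives are written `(lieDeriv f)^[m] h`. -/
noncomputable def lieDeriv (f : E → E) (h : E → F) : E → F := fun x ↦ fderiv ℝ h x (f x)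

theorem lieDeriv_id (f : E → E) : lieDeriv f id = f := by
  ext x
  simp [lieDeriv]

theorem contDiffAt_lieDeriv {f : E → E} {h : E → F} {x : E} {n : WithTop ℕ∞}
    (hf : ContDiffAt ℝ n f x) (hh : ContDiffAt ℝ (n + 1) h x) : ContDiffAt ℝ n (lieDeriv f h) x :=
  hh.fderiv_right_succ.clm_apply hf

theorem contDiffAt_iterate_lieDeriv {f : E → E} {h : E → F} {x : E} {N m k : ℕ}
    (hf : ContDiffAt ℝ N f x) (hh : ContDiffAt ℝ (N + 1) h x) (hmk : m + k = N + 1) :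
    ContDiffAt ℝ k ((lieDeriv f)^[m] h) x := by
  induction m generalizing k with
  | zero =>
    obtain rfl : k = N + 1 := by lia
    exact_mod_cast hh
  | succ m ih =>
    rw [Function.iterate_succ_apply']
    exact contDiffAt_lieDeriv (hf.of_le (mod_cast (by lia : k ≤ N)))
      (mod_cast ih (k := k + 1) (by lia))

theorem hasDerivWithinAt_comp_integralCurve {f : E → E} {h : E → F} {γ : ℝ → E} {s : Set ℝ} {t : ℝ}
    (hγ : IsIntegralCurveOn γ (fun _ ↦ f) s) (ht : t ∈ s) (hh : DifferentiableAt ℝ h (γ t)) :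
    HasDerivWithinAt (fun r ↦ h (γ r)) (lieDeriv f h (γ t)) s t :=
  hh.hasFDerivAt.comp_hasDerivWithinAt t (hγ t ht)

theorem norm_comp_integralCurve_sub_taylor_le {f : E → E} {h : E → F} {γ : ℝ → E} {T M : ℝ} {n : ℕ}
    (hγ : IsIntegralCurveOn γ (fun _ ↦ f) (Icc 0 T))
    (hh : ∀ k < n, ∀ t ∈ Icc 0 T, DifferentiableAt ℝ ((lieDeriv f)^[k] h) (γ t))
    (hM : ∀ t ∈ Icc 0 T, ‖(lieDeriv f)^[n] h (γ t)‖ ≤ M) :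
    ∀ t ∈ Icc 0 T, ‖h (γ t) - ∑ k ∈ Finset.range n, (t ^ k / k !) • (lieDeriv f)^[k] h (γ 0)‖
      ≤ M * (t ^ n / n !) := by
  refine norm_sub_taylor_le (g := fun k t ↦ (lieDeriv f)^[k] h (γ t)) (fun k hk t ht ↦ ?_) hM
  rw [Function.iterate_succ_apply']
  exact hasDerivWithinAt_comp_integralCurve hγ ht (hh k hk t ht)

theorem mapsTo_closedBall_of_isIntegralCurveOn {f : E → E} {γ : ℝ → E} {x₀ : E} {T M r : ℝ}
    (hγ : IsIntegralCurveOn γ (fun _ ↦ f) (Icc 0 T))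
    (hM : ∀ y ∈ Metric.closedBall x₀ r, ‖f y‖ < M) (hr : 0 ≤ r)
    (hT : ‖γ 0 - x₀‖ + M * T ≤ r) : MapsTo γ (Icc 0 T) (Metric.closedBall x₀ r) := by
  have hM0 : 0 ≤ M := (norm_nonneg _).trans (hM _ (Metric.mem_closedBall_self hr)).le
  have hmem {t : ℝ} (ht : t ≤ T) (hdist : ‖γ t - γ 0‖ ≤ M * t) :
      γ t ∈ Metric.closedBall x₀ r := by
    refine mem_closedBall_iff_norm.2 ((norm_sub_le_norm_sub_add_norm_sub _ (γ 0) _).trans ?_)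
    linarith [mul_le_mul_of_nonneg_left ht hM0]
  have hsub (t : ℝ) (ht : t ∈ Icc 0 T) :
      HasDerivWithinAt (fun s ↦ γ s - γ 0) (f (γ t)) (Icc 0 T) t := (hγ t ht).sub_const _
  have hdist : ∀ ⦃t⦄, t ∈ Icc 0 T → ‖γ t - γ 0‖ ≤ M * t :=
    image_norm_le_of_norm_deriv_right_lt_deriv_boundary
      (fun t ht ↦ (hsub t ht).continuousWithinAt)
      (fun t ht ↦ (hsub t (Ico_subset_Icc_self ht)).mono_of_mem_nhdsWithin
        (Icc_mem_nhdsGE_of_mem ht))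
      (by simp) (fun t ↦ by simpa using (hasDerivAt_id' t).const_mul M)
      fun t ht h ↦ hM _ (hmem ht.2.le h.le)
  exact fun t ht ↦ hmem ht.2 (hdist ht)

/-- `s` is a region around an invisible fold of `f` on `{H = 0}`: there `H` is strictly concave
along orbits, with constant `c`, and `M` bounds all the quantities that enter the Taylor remainders
of `H`, `𝓛_f H` and the orbits themselves (whose second time derivative is `𝓛_f f`). -/
structure IsInvisibleFoldRegion (f : E → E) (H : E → ℝ) (c M : ℝ) (s : Set E) : Prop where
  differentiableAt_field : ∀ y ∈ s, DifferentiableAt ℝ f y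
  differentiableAt_iterate : ∀ k < 4, ∀ y ∈ s, DifferentiableAt ℝ ((lieDeriv f)^[k] H) y
  iterate_two_le : ∀ y ∈ s, (lieDeriv f)^[2] H y ≤ -c
  abs_iterate_three_le : ∀ y ∈ s, |(lieDeriv f)^[3] H y| ≤ M
  abs_iterate_four_le : ∀ y ∈ s, |(lieDeriv f)^[4] H y| ≤ M
  norm_field_lt : ∀ y ∈ s, ‖f y‖ < M
  norm_lieDeriv_field_le : ∀ y ∈ s, ‖lieDeriv f f y‖ ≤ M

theorem exists_isInvisibleFoldRegion {f : E → E} {H : E → ℝ} {x₀ : E} (hf : ContDiffAt ℝ 3 f x₀)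
    (hH : ContDiffAt ℝ 4 H x₀) (hfold : (lieDeriv f)^[2] H x₀ < 0) :
    ∃ c > 0, ∃ M > 0, ∃ r > 0, IsInvisibleFoldRegion f H c M (Metric.closedBall x₀ r) := by
  have hiterate {m k : ℕ} (hmk : m + k = 4) : ContDiffAt ℝ k ((lieDeriv f)^[m] H) x₀ :=
    contDiffAt_iterate_lieDeriv (N := 3) hf (by norm_num; exact hH) hmk
  have hcont {m : ℕ} (hm : m ≤ 4) : ContinuousAt ((lieDeriv f)^[m] H) x₀ :=
    (hiterate (Nat.add_sub_of_le hm)).continuousAt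
  have hacc : ContinuousAt (lieDeriv f f) x₀ :=
    (contDiffAt_lieDeriv (n := 0) (hf.of_le (by norm_num)) (hf.of_le (by norm_num))).continuousAt
  have hdiff_field : ∀ᶠ y in 𝓝 x₀, DifferentiableAt ℝ f y :=
    (hf.eventually (by simp)).mono fun y hy ↦ hy.differentiableAt (by simp)
  have hdiff_iterate : ∀ᶠ y in 𝓝 x₀, ∀ k < 4, DifferentiableAt ℝ ((lieDeriv f)^[k] H) y := by
    refine (eventually_all_finite (finite_lt_nat 4)).2 fun k (hk : k < 4) ↦ ?_
    refine ((hiterate (Nat.add_sub_of_le hk.le)).eventually (by simp)).mono fun y hy ↦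
      hy.differentiableAt (mod_cast (by lia))
  have hbound : ∀ᶠ M in atTop, 0 < M ∧ |(lieDeriv f)^[3] H x₀| < M ∧ |(lieDeriv f)^[4] H x₀| < M ∧
      ‖f x₀‖ < M ∧ ‖lieDeriv f f x₀‖ < M := by
    simp only [eventually_and, eventually_gt_atTop, and_self]
  obtain ⟨M, hM, h3, h4, hfM, haccM⟩ := hbound.exists
  obtain ⟨c, hc, hcfold⟩ := exists_between (neg_pos.2 hfold)
  have hregion := hdiff_field.and <| hdiff_iterate.and <|
    ((hcont (m := 2) (by norm_num)).eventually_lt_const (lt_neg.1 hcfold)).and <|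
    ((hcont (m := 3) (by norm_num)).abs.eventually_lt_const h3).and <|
    ((hcont (m := 4) le_rfl).abs.eventually_lt_const h4).and <|
    (hf.continuousAt.norm.eventually_lt_const hfM).and (hacc.norm.eventually_lt_const haccM)
  obtain ⟨r, hr, hball⟩ := Metric.nhds_basis_closedBall.eventually_iff.1 hregion
  simp only [forall_and] at hball
  obtain ⟨hdf, hdH, h2, h3, h4, hfM, haccM⟩ := hball
  exact ⟨c, hc, M, hM, r, hr, hdf, fun k hk y hy ↦ hdH y hy k hk, fun y hy ↦ (h2 y hy).le,
    fun y hy ↦ (h3 y hy).le, fun y hy ↦ (h4 y hy).le, hfM, fun y hy ↦ (haccM y hy).le⟩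

namespace IsInvisibleFoldRegion

variable {f : E → E} {H : E → ℝ} {γ : ℝ → E} {c M T : ℝ} {s : Set E}

theorem exists_return_time (hs : IsInvisibleFoldRegion f H c M s) (hc : 0 < c)
    (hγ : IsIntegralCurveOn γ (fun _ ↦ f) (Icc 0 T)) (hγs : MapsTo γ (Icc 0 T) s)
    (h0 : H (γ 0) = 0) (hν : 0 < lieDeriv f H (γ 0)) (hT : 2 * lieDeriv f H (γ 0) / c ≤ T) :
    ∃ τ ∈ Ioc 0 (2 * lieDeriv f H (γ 0) / c), H (γ τ) = 0 ∧ ∀ t ∈ Ioo 0 τ, 0 < H (γ t) :=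
  exists_first_zero_of_deriv2_le (u' := fun t ↦ lieDeriv f H (γ t)) hc
    (fun t ht ↦ hasDerivWithinAt_comp_integralCurve hγ ht
      (hs.differentiableAt_iterate 0 (by norm_num) _ (hγs ht)))
    (fun t ht ↦ hasDerivWithinAt_comp_integralCurve hγ ht
      (hs.differentiableAt_iterate 1 (by norm_num) _ (hγs ht)))
    (fun t ht ↦ hs.iterate_two_le _ (hγs ht)) h0 hν hT

theorem norm_sub_add_smul_field_le (hs : IsInvisibleFoldRegion f H c M s)
    (hγ : IsIntegralCurveOn γ (fun _ ↦ f) (Icc 0 T)) (hγs : MapsTo γ (Icc 0 T) s) {t : ℝ}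
    (ht : t ∈ Icc 0 T) (a : ℝ) :
    ‖γ t - γ 0 + a • f (γ 0)‖ ≤ M * t ^ 2 / 2 + |t + a| * M := by
  have htaylor : ‖γ t - (γ 0 + t • f (γ 0))‖ ≤ M * (t ^ 2 / 2) := by
    have h := norm_comp_integralCurve_sub_taylor_le (h := id) (n := 2) (M := M) hγ
      (fun k hk t ht ↦ by
        interval_cases k
        · exact differentiableAt_id
        · simpa [lieDeriv_id] using hs.differentiableAt_field _ (hγs ht))
      (fun t ht ↦ by simpa [lieDeriv_id] using hs.norm_lieDeriv_field_le _ (hγs ht)) t ht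
    simpa [Finset.sum_range_succ, lieDeriv_id] using h
  have hf0 : ‖f (γ 0)‖ ≤ M := (hs.norm_field_lt _ (hγs ⟨le_rfl, ht.1.trans ht.2⟩)).le
  calc ‖γ t - γ 0 + a • f (γ 0)‖ = ‖(γ t - (γ 0 + t • f (γ 0))) + (t + a) • f (γ 0)‖ := by
        congr 1; module
    _ ≤ ‖γ t - (γ 0 + t • f (γ 0))‖ + |t + a| * ‖f (γ 0)‖ := by
        rw [← Real.norm_eq_abs, ← norm_smul]; exact norm_add_le _ _
    _ ≤ M * t ^ 2 / 2 + |t + a| * M := by rw [mul_div_assoc]; gcongr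

theorem abs_return_time_add_le (hs : IsInvisibleFoldRegion f H c M s) (hc : 0 < c)
    (hγ : IsIntegralCurveOn γ (fun _ ↦ f) (Icc 0 T)) (hγs : MapsTo γ (Icc 0 T) s)
    (h0 : H (γ 0) = 0) {τ : ℝ} (hτ : τ ∈ Ioc 0 T) (hτν : τ ≤ 2 * lieDeriv f H (γ 0) / c)
    (hreturn : H (γ τ) = 0) :
    |τ + 2 * lieDeriv f H (γ 0) / (lieDeriv f)^[2] H (γ 0)|
      ≤ 4 * M / (3 * c ^ 3) * lieDeriv f H (γ 0) ^ 2 := by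
  have hγ0 : γ 0 ∈ s := hγs (left_mem_Icc.2 (hτ.1.le.trans hτ.2))
  refine abs_return_time_add_le_of_taylor hc (hs.iterate_two_le _ hγ0) hτ.1 hτν
    ((abs_nonneg _).trans (hs.abs_iterate_three_le _ hγ0)) ?_
  have h := norm_comp_integralCurve_sub_taylor_le (n := 3) hγ
    (fun k hk t ht ↦ hs.differentiableAt_iterate k (by lia) _ (hγs ht))
    (fun t ht ↦ hs.abs_iterate_three_le _ (hγs ht)) τ (Ioc_subset_Icc_self hτ)
  simp only [Finset.sum_range_succ, Finset.sum_range_zero, Function.iterate_zero, id,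
    Function.iterate_one, hreturn, h0, Nat.factorial, smul_eq_mul, Real.norm_eq_abs] at h
  rw [← abs_neg]
  convert h using 2 <;> push_cast <;> ring

theorem abs_return_velocity_add_sub_le (hs : IsInvisibleFoldRegion f H c M s) (hc : 0 < c)
    (hγ : IsIntegralCurveOn γ (fun _ ↦ f) (Icc 0 T)) (hγs : MapsTo γ (Icc 0 T) s)
    (h0 : H (γ 0) = 0) {τ : ℝ} (hτ : τ ∈ Ioc 0 T) (hτν : τ ≤ 2 * lieDeriv f H (γ 0) / c)
    (hreturn : H (γ τ) = 0) :
    |lieDeriv f H (γ τ) + lieDeriv f H (γ 0) -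
        2 * (lieDeriv f)^[3] H (γ 0) / (3 * (lieDeriv f)^[2] H (γ 0) ^ 2) *
          lieDeriv f H (γ 0) ^ 2|
      ≤ (2 * M / c ^ 3 + M ^ 2 / c ^ 4) * lieDeriv f H (γ 0) ^ 3 := by
  have hγ0 : γ 0 ∈ s := hγs (left_mem_Icc.2 (hτ.1.le.trans hτ.2))
  refine abs_return_velocity_add_sub_le_of_taylor hc (hs.iterate_two_le _ hγ0)
    (hs.abs_iterate_three_le _ hγ0) hτ.1 hτν ?_ ?_
    (hs.abs_return_time_add_le hc hγ hγs h0 hτ hτν hreturn)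
  · have h := norm_comp_integralCurve_sub_taylor_le (n := 4) hγ
      (fun k hk t ht ↦ hs.differentiableAt_iterate k hk _ (hγs ht))
      (fun t ht ↦ hs.abs_iterate_four_le _ (hγs ht)) τ (Ioc_subset_Icc_self hτ)
    simp only [Finset.sum_range_succ, Finset.sum_range_zero, Function.iterate_zero, id,
      Function.iterate_one, hreturn, h0, Nat.factorial, smul_eq_mul, Real.norm_eq_abs] at h
    rw [← abs_neg]
    convert h using 2 <;> push_cast <;> ring
  · have h : |lieDeriv f H (γ τ) -
        ∑ k ∈ Finset.range 3, (τ ^ k / k !) • (lieDeriv f)^[k + 1] H (γ 0)| ≤ M * (τ ^ 3 / 3 !) :=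
      norm_comp_integralCurve_sub_taylor_le (h := lieDeriv f H) (n := 3) hγ
        (fun k hk t ht ↦ hs.differentiableAt_iterate (k + 1) (by lia) _ (hγs ht))
        (fun t ht ↦ hs.abs_iterate_four_le _ (hγs ht)) τ (Ioc_subset_Icc_self hτ)
    simp only [Finset.sum_range_succ, Finset.sum_range_zero, zero_add, Nat.reduceAdd,
      Function.iterate_one, Nat.factorial, smul_eq_mul] at h
    convert h using 2 <;> push_cast <;> ring

theorem norm_return_displacement_add_le (hs : IsInvisibleFoldRegion f H c M s) (hc : 0 < c)
    (hγ : IsIntegralCurveOn γ (fun _ ↦ f) (Icc 0 T)) (hγs : MapsTo γ (Icc 0 T) s)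
    (h0 : H (γ 0) = 0) {τ : ℝ} (hτ : τ ∈ Ioc 0 T) (hτν : τ ≤ 2 * lieDeriv f H (γ 0) / c)
    (hreturn : H (γ τ) = 0) :
    ‖γ τ - γ 0 + (2 * lieDeriv f H (γ 0) / (lieDeriv f)^[2] H (γ 0)) • f (γ 0)‖
      ≤ (2 * M / c ^ 2 + 4 * M ^ 2 / (3 * c ^ 3)) * lieDeriv f H (γ 0) ^ 2 := by
  have hM : 0 ≤ M := (norm_nonneg _).trans
    (hs.norm_field_lt _ (hγs (left_mem_Icc.2 (hτ.1.le.trans hτ.2)))).le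
  have htime := hs.abs_return_time_add_le hc hγ hγs h0 hτ hτν hreturn
  set ν := lieDeriv f H (γ 0)
  calc _ ≤ M * τ ^ 2 / 2 + |τ + 2 * ν / (lieDeriv f)^[2] H (γ 0)| * M :=
        hs.norm_sub_add_smul_field_le hγ hγs (Ioc_subset_Icc_self hτ) _
    _ ≤ M * (2 * ν / c) ^ 2 / 2 + 4 * M / (3 * c ^ 3) * ν ^ 2 * M := by
        have := hτ.1
        gcongr
    _ = (2 * M / c ^ 2 + 4 * M ^ 2 / (3 * c ^ 3)) * ν ^ 2 := by field_simp

end IsInvisibleFoldRegion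

theorem fold_return_map_asymptotics_general {f : E → E} {H : E → ℝ} {x₀ : E}
    (hf : ContDiffAt ℝ 3 f x₀) (hH : ContDiffAt ℝ 4 H x₀) (hV₀ : lieDeriv f H x₀ = 0)
    (hinv : (lieDeriv f)^[2] H x₀ < 0) :
    ∃ T > 0, ∃ δ > 0, ∃ K > 0, ∀ γ : ℝ → E, IsIntegralCurveOn γ (fun _ ↦ f) (Icc 0 T) →
      H (γ 0) = 0 → ‖γ 0 - x₀‖ < δ → 0 < lieDeriv f H (γ 0) →
      ∃ τ ∈ Ioc 0 T,
        H (γ τ) = 0 ∧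
        (∀ t ∈ Ioo 0 τ, 0 < H (γ t)) ∧
        |τ + 2 * lieDeriv f H (γ 0) / (lieDeriv f)^[2] H (γ 0)| ≤ K * lieDeriv f H (γ 0) ^ 2 ∧
        ‖γ τ - γ 0 + (2 * lieDeriv f H (γ 0) / (lieDeriv f)^[2] H (γ 0)) • f (γ 0)‖
          ≤ K * lieDeriv f H (γ 0) ^ 2 ∧
        |lieDeriv f H (γ τ) + lieDeriv f H (γ 0) -
            2 * (lieDeriv f)^[3] H (γ 0) / (3 * (lieDeriv f)^[2] H (γ 0) ^ 2) *
              lieDeriv f H (γ 0) ^ 2|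
          ≤ K * lieDeriv f H (γ 0) ^ 3 := by
  obtain ⟨c, hc, M, hM, r, hr, hs⟩ := exists_isInvisibleFoldRegion hf hH hinv
  set T := r / (2 * M) with hT
  have hT0 : 0 < T := by positivity
  obtain ⟨δ, hδ, hδν⟩ : ∃ δ > 0, ∀ x ∈ Metric.ball x₀ δ, lieDeriv f H x < c * T / 2 := by
    have hcont : ContinuousAt (lieDeriv f H) x₀ :=
      (contDiffAt_lieDeriv (n := 3) hf (by norm_num; exact hH)).continuousAt
    exact Metric.eventually_nhds_iff_ball.1
      (hcont.eventually_lt_const (by rw [hV₀]; positivity))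
  set A := 4 * M / (3 * c ^ 3)
  set B := 2 * M / c ^ 2 + 4 * M ^ 2 / (3 * c ^ 3)
  set C := 2 * M / c ^ 3 + M ^ 2 / c ^ 4
  refine ⟨T, hT0, min δ (r / 2), by positivity, max A (max B C), by positivity,
    fun γ hγ h0 hγ0 hν ↦ ?_⟩
  have hγs : MapsTo γ (Icc 0 T) (Metric.closedBall x₀ r) := by
    refine mapsTo_closedBall_of_isIntegralCurveOn hγ hs.norm_field_lt hr.le ?_
    have hMT : M * T = r / 2 := by rw [hT]; field_simp
    linarith [min_le_right δ (r / 2)]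
  have hνT : 2 * lieDeriv f H (γ 0) / c ≤ T := by
    have := hδν _ (mem_ball_iff_norm.2 (hγ0.trans_le (min_le_left _ _)))
    rw [div_le_iff₀ hc]
    linarith
  obtain ⟨τ, hτ, hreturn, hpos⟩ := hs.exists_return_time hc hγ hγs h0 hν hνT
  have hτT : τ ∈ Ioc 0 T := ⟨hτ.1, hτ.2.trans hνT⟩
  refine ⟨τ, hτT, hreturn, hpos, ?_, ?_, ?_⟩
  · refine (hs.abs_return_time_add_le hc hγ hγs h0 hτT hτ.2 hreturn).trans ?_
    gcongr
    exact le_max_left _ _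
  · refine (hs.norm_return_displacement_add_le hc hγ hγs h0 hτT hτ.2 hreturn).trans ?_
    gcongr
    exact (le_max_left _ _).trans (le_max_right _ _)
  · refine (hs.abs_return_velocity_add_sub_le hc hγ hγs h0 hτT hτ.2 hreturn).trans ?_
    gcongr
    exact (le_max_right _ _).trans (le_max_right _ _)

end FoldReturn

/-- First-return asymptotics near an invisible fold: for `x` on `{H = 0}` near `x₀` with
`ν = 𝓛_f H(x) > 0`, the orbit makes an excursion into `{H > 0}` and returns after a time
`τ = −2ν/𝓛²_f H(x) + O(ν²)`, with the return point and return value of `𝓛_f H` given to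
the stated orders in `ν`. -/
theorem fold_return_map_asymptotics {n : ℕ}
    (f : EuclideanSpace ℝ (Fin n) → EuclideanSpace ℝ (Fin n))
    (H : EuclideanSpace ℝ (Fin n) → ℝ)
    (hf : ContDiff ℝ 3 f) (hH : ContDiff ℝ 4 H)
    (φ : ℝ → EuclideanSpace ℝ (Fin n) → EuclideanSpace ℝ (Fin n))
    (hφ0 : ∀ x, φ 0 x = x)
    (hφ : ∀ t x, HasDerivAt (fun s => φ s x) (f (φ t x)) t)
    (x₀ : EuclideanSpace ℝ (Fin n)) (hHx₀ : H x₀ = 0)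
    (hV₀ : lieIter f H 1 x₀ = 0) (hinv : lieIter f H 2 x₀ < 0) :
    ∃ δ > (0:ℝ), ∃ K > (0:ℝ), ∀ x : EuclideanSpace ℝ (Fin n), H x = 0 → ‖x - x₀‖ < δ →
      0 < lieIter f H 1 x →
      ∃ τ > (0:ℝ),
        H (φ τ x) = 0 ∧
        (∀ t ∈ Set.Ioo (0:ℝ) τ, 0 < H (φ t x)) ∧
        |τ + 2 * lieIter f H 1 x / lieIter f H 2 x| ≤ K * (lieIter f H 1 x) ^ 2 ∧
        ‖φ τ x - x + (2 * lieIter f H 1 x / lieIter f H 2 x) • f x‖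
          ≤ K * (lieIter f H 1 x) ^ 2 ∧
        |lieIter f H 1 (φ τ x) + lieIter f H 1 x -
            (2 * lieIter f H 3 x / (3 * (lieIter f H 2 x) ^ 2)) * (lieIter f H 1 x) ^ 2|
          ≤ K * (lieIter f H 1 x) ^ 3 := by
  -- `lieIter f H m` agrees definitionally with `(lieDeriv f)^[m] H` for each numeral `m`.
  obtain ⟨T, -, δ, hδ, K, hK, hreturn⟩ :=
    fold_return_map_asymptotics_general hf.contDiffAt hH.contDiffAt hV₀ hinv
  refine ⟨δ, hδ, K, hK, fun x hHx hx hν ↦ ?_⟩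
  obtain ⟨τ, hτ, h⟩ := hreturn (φ · x) (fun t _ ↦ (hφ t x).hasDerivWithinAt)
    (by rwa [hφ0]) (by rwa [hφ0]) (by rwa [hφ0])
  simp only [hφ0] at h
  exact ⟨τ, hτ.1, h⟩
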